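/- arXiv:2602.14453 — 2 statements merged into one kernel-verified Lean document; each statement's English description precedes it below -/
import Mathlib

section
/- (Theorem 1, first part) For all r, σ > 0 and γ > 0, the Fisher information correlation coefficient ρ = J₁₂/√(J₁₁·J₂₂) of the MI-ISAC Fisher information matrix equals (3 + 2·α·r) / √(2·((3 + α·r)² + (α·r)²)), where α = α(σ). -/
open Real

/-- Field attenuation constant `α(σ) = √(π f₀ μ₀ σ)`. -/
noncomputable def miAlpha (f₀ μ₀ σ : ℝ) : ℝ := Real.sqrt (Real.pi * f₀ * μ₀ * σ)

/-- `β(r,σ) = 3/r + α(σ)`. -/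
noncomputable def miBeta (f₀ μ₀ r σ : ℝ) : ℝ := 3 / r + miAlpha f₀ μ₀ σ

/-!
The Fisher information matrix is `γ` times the Gram matrix of two complex scores, the negated
logarithmic derivatives of a channel proportional to `r⁻³ exp (-(1 + i) α r)`, so `ρ` is the cosine
of the angle between them. The range score points along `(3 + αr) + αr i` and the conductivity score
along `1 + i`; positive factors do not change an angle, which leaves `αr` as the only parameter.
-/

open InnerProductGeometry
open scoped RealInnerProductSpace

theorem mul_inner_div_sqrt_mul_norm_sq_eq_cos_angle {V : Type*} [NormedAddCommGroup V]
    [InnerProductSpace ℝ V] {γ : ℝ} (hγ : 0 < γ) (u v : V) :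
    γ * ⟪u, v⟫ / √((γ * ‖u‖ ^ 2) * (γ * ‖v‖ ^ 2)) = cos (angle u v) := by
  have hsqrt : √((γ * ‖u‖ ^ 2) * (γ * ‖v‖ ^ 2)) = γ * (‖u‖ * ‖v‖) := by
    rw [show (γ * ‖u‖ ^ 2) * (γ * ‖v‖ ^ 2) = (γ * (‖u‖ * ‖v‖)) ^ 2 by ring]
    exact sqrt_sq (by positivity)
  rw [hsqrt, mul_div_mul_left _ _ hγ.ne', cos_angle]

theorem inner_mk_one_add_I (x y : ℝ) : ⟪(⟨x, y⟩ : ℂ), 1 + Complex.I⟫ = x + y := by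
  simp [Complex.inner]

theorem norm_sq_mk (x y : ℝ) : ‖(⟨x, y⟩ : ℂ)‖ ^ 2 = x ^ 2 + y ^ 2 := by
  rw [Complex.sq_norm, Complex.normSq_mk, sq, sq]

theorem norm_sq_one_add_I : ‖1 + Complex.I‖ ^ 2 = 2 := by
  simp [Complex.sq_norm, Complex.normSq_apply, one_add_one_eq_two]

theorem cos_angle_mk_one_add_I (x y : ℝ) :
    cos (angle (⟨x, y⟩ : ℂ) (1 + Complex.I)) = (x + y) / √(2 * (x ^ 2 + y ^ 2)) := by
  rw [← mul_inner_div_sqrt_mul_norm_sq_eq_cos_angle one_pos, inner_mk_one_add_I, norm_sq_mk,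
    norm_sq_one_add_I, one_mul, one_mul, one_mul, mul_comm 2]

/-- The score of the range: minus the derivative in `r` of the logarithm of a channel proportional
to `r⁻³ exp (-(1 + i) α r)`. -/
noncomputable def rangeScore (α r : ℝ) : ℂ := ⟨3 / r + α, α⟩

/-- The score of the conductivity: minus the derivative in `σ` of the logarithm of a channel
proportional to `r⁻³ exp (-(1 + i) α r)`, where `α` is proportional to `√σ`, so that its derivative
in `σ` is `α / (2σ)`. The value of `α` at `σ` is passed as an argument. -/
noncomputable def conductivityScore (α r σ : ℝ) : ℂ := (α * r / (2 * σ)) • (1 + Complex.I)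

section Scores

variable (α r σ : ℝ)

theorem norm_sq_rangeScore : ‖rangeScore α r‖ ^ 2 = (3 / r + α) ^ 2 + α ^ 2 :=
  norm_sq_mk _ _

theorem norm_sq_conductivityScore :
    ‖conductivityScore α r σ‖ ^ 2 = α ^ 2 * r ^ 2 / (2 * σ ^ 2) := by
  rw [conductivityScore, norm_smul, mul_pow, norm_sq_one_add_I, norm_eq_abs, sq_abs]
  ring

theorem inner_rangeScore_conductivityScore :
    ⟪rangeScore α r, conductivityScore α r σ⟫ = α * r * (3 / r + α + α) / (2 * σ) := by
  rw [rangeScore, conductivityScore, real_inner_smul_right, inner_mk_one_add_I]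
  ring

variable {α r σ}

theorem rangeScore_eq_inv_smul (hr : r ≠ 0) :
    rangeScore α r = r⁻¹ • (⟨3 + α * r, α * r⟩ : ℂ) := by
  apply Complex.ext <;> simp only [rangeScore, Complex.smul_re, Complex.smul_im, smul_eq_mul] <;>
    field_simp

theorem angle_rangeScore_conductivityScore (hα : 0 < α) (hr : 0 < r) (hσ : 0 < σ) :
    angle (rangeScore α r) (conductivityScore α r σ) =
      angle (⟨3 + α * r, α * r⟩ : ℂ) (1 + Complex.I) := by
  rw [rangeScore_eq_inv_smul hr.ne', conductivityScore, angle_smul_left_of_pos _ _ (inv_pos.2 hr),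
    angle_smul_right_of_pos _ _ (by positivity)]

end Scores

theorem miAlpha_pos {f₀ μ₀ σ : ℝ} (hf₀ : 0 < f₀) (hμ₀ : 0 < μ₀) (hσ : 0 < σ) :
    0 < miAlpha f₀ μ₀ σ :=
  sqrt_pos.2 (by positivity)

/-- (Theorem 1, first part) The Fisher information correlation coefficient
`ρ = J₁₂/√(J₁₁·J₂₂)` of the MI-ISAC FIM equals `(3 + 2αr)/√(2((3+αr)² + (αr)²))`. -/
theorem stmt_6 (f₀ μ₀ : ℝ) (hf₀ : 0 < f₀) (hμ₀ : 0 < μ₀)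
    (r σ γ : ℝ) (hr : 0 < r) (hσ : 0 < σ) (hγ : 0 < γ) :
    (γ * miAlpha f₀ μ₀ σ * r * (miBeta f₀ μ₀ r σ + miAlpha f₀ μ₀ σ) / (2 * σ)) /
        Real.sqrt ((γ * (miBeta f₀ μ₀ r σ ^ 2 + miAlpha f₀ μ₀ σ ^ 2)) *
          (γ * miAlpha f₀ μ₀ σ ^ 2 * r ^ 2 / (2 * σ ^ 2))) =
      (3 + 2 * (miAlpha f₀ μ₀ σ * r)) /
        Real.sqrt (2 * ((3 + miAlpha f₀ μ₀ σ * r) ^ 2 + (miAlpha f₀ μ₀ σ * r) ^ 2)) := by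
  have hα : 0 < miAlpha f₀ μ₀ σ := miAlpha_pos hf₀ hμ₀ hσ
  rw [miBeta]
  generalize miAlpha f₀ μ₀ σ = α at hα ⊢
  calc
    _ = γ * ⟪rangeScore α r, conductivityScore α r σ⟫ /
          √((γ * ‖rangeScore α r‖ ^ 2) * (γ * ‖conductivityScore α r σ‖ ^ 2)) := by
      rw [inner_rangeScore_conductivityScore, norm_sq_rangeScore, norm_sq_conductivityScore]
      ring_nf
    _ = cos (angle (rangeScore α r) (conductivityScore α r σ)) :=
      mul_inner_div_sqrt_mul_norm_sq_eq_cos_angle hγ _ _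
    _ = cos (angle (⟨3 + α * r, α * r⟩ : ℂ) (1 + Complex.I)) := by
      rw [angle_rangeScore_conductivityScore hα hr hσ]
    _ = (3 + 2 * (α * r)) / √(2 * ((3 + α * r) ^ 2 + (α * r) ^ 2)) := by
      rw [cos_angle_mk_one_add_I, add_assoc, ← two_mul]
end

section
/- The MI channel map h is injective on the phase-unwrapped region: if r₁, σ₁, r₂, σ₂ > 0 satisfy α(σ₁)·r₁ < 2π and α(σ₂)·r₂ < 2π and h(r₁,σ₁) = h(r₂,σ₂), then r₁ = r₂ and σ₁ = σ₂. -/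
/-!
Absorbing `r⁻³` into the exponential gives `h(r, σ) = C exp (-(1 + i) t - 3 log r)` with
`t = α(σ) r`. The exponential is injective on pairs of points whose imaginary parts differ by less
than `2π`, so equal gains have equal exponents as soon as their phases `t` differ by less than `2π`.
Comparing imaginary parts recovers `t`, then comparing real parts recovers `r`, and `α(σ) = t / r`
determines `σ`.
-/

open Complex Real

/-- MI channel gain `h(r,σ) = (C/r³)·exp(−(1+i)·α(σ)·r)`. -/
noncomputable def miH (f₀ μ₀ : ℝ) (C : ℂ) (r σ : ℝ) : ℂ :=
  (C / (r : ℂ) ^ 3) * Complex.exp (-(1 + Complex.I) * (miAlpha f₀ μ₀ σ : ℂ) * (r : ℂ))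

theorem cexp_inj_of_abs_im_sub_lt_two_pi {z w : ℂ} (hzw : |z.im - w.im| < 2 * π)
    (h : Complex.exp z = Complex.exp w) : z = w := by
  obtain ⟨n, rfl⟩ := Complex.exp_eq_exp_iff_exists_int.1 h
  have hn : |(n : ℝ)| * (2 * π) < 1 * (2 * π) := by
    simpa [abs_mul, abs_of_pos pi_pos] using hzw
  have hn_lt : |n| < 1 := by exact_mod_cast lt_of_mul_lt_mul_right hn two_pi_pos.le
  simp [Int.abs_lt_one_iff.1 hn_lt]

theorem cexp_div_pow_eq_cexp_sub_log (z : ℂ) {r : ℝ} (hr : 0 < r) (n : ℕ) :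
    Complex.exp z / (r : ℂ) ^ n = Complex.exp (z - (n * Real.log r : ℝ)) := by
  rw [Complex.exp_sub, ← Complex.ofReal_exp, Real.exp_nat_mul, Real.exp_log hr,
    Complex.ofReal_pow]

theorem cexp_mul_ofReal_div_pow_inj {z : ℂ} (hz : z.im ≠ 0) {n : ℕ} (hn : n ≠ 0)
    {r₁ r₂ t₁ t₂ : ℝ} (hr₁ : 0 < r₁) (hr₂ : 0 < r₂) (ht : |z.im * t₁ - z.im * t₂| < 2 * π)
    (h : Complex.exp (z * t₁) / (r₁ : ℂ) ^ n = Complex.exp (z * t₂) / (r₂ : ℂ) ^ n) :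
    r₁ = r₂ ∧ t₁ = t₂ := by
  rw [cexp_div_pow_eq_cexp_sub_log _ hr₁, cexp_div_pow_eq_cexp_sub_log _ hr₂] at h
  have hexp : z * t₁ - (n * Real.log r₁ : ℝ) = z * t₂ - (n * Real.log r₂ : ℝ) :=
    cexp_inj_of_abs_im_sub_lt_two_pi
      (by simpa only [sub_im, im_mul_ofReal, ofReal_im, sub_zero] using ht) h
  have him : z.im * t₁ = z.im * t₂ := by
    simpa only [sub_im, im_mul_ofReal, ofReal_im, sub_zero] using congrArg Complex.im hexp
  obtain rfl : t₁ = t₂ := mul_left_cancel₀ hz him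
  have hlog : (n : ℝ) * Real.log r₁ = n * Real.log r₂ :=
    Complex.ofReal_injective (sub_right_injective hexp)
  exact ⟨Real.log_injOn_pos hr₁ hr₂ (mul_left_cancel₀ (Nat.cast_ne_zero.2 hn) hlog), rfl⟩

theorem miAlpha_injOn {f₀ μ₀ : ℝ} (hf₀ : 0 < f₀) (hμ₀ : 0 < μ₀) :
    Set.InjOn (miAlpha f₀ μ₀) (Set.Ici 0) := by
  intro σ₁ hσ₁ σ₂ hσ₂ h
  have hc : 0 < π * f₀ * μ₀ := by positivity
  exact mul_left_cancel₀ hc.ne'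
    ((Real.sqrt_inj (mul_nonneg hc.le hσ₁) (mul_nonneg hc.le hσ₂)).1 h)

theorem miAlpha_mul_nonneg (f₀ μ₀ σ : ℝ) {r : ℝ} (hr : 0 ≤ r) : 0 ≤ miAlpha f₀ μ₀ σ * r :=
  mul_nonneg (Real.sqrt_nonneg _) hr

theorem miH_eq_mul_cexp_div_pow (f₀ μ₀ : ℝ) (C : ℂ) (r σ : ℝ) :
    miH f₀ μ₀ C r σ =
      C * (Complex.exp (-(1 + Complex.I) * (miAlpha f₀ μ₀ σ * r : ℝ)) / (r : ℂ) ^ 3) := by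
  rw [miH, Complex.ofReal_mul, mul_assoc, div_mul_eq_mul_div, mul_div_assoc]

theorem stmt_16_general {f₀ μ₀ : ℝ} (hf₀ : 0 < f₀) (hμ₀ : 0 < μ₀) {C : ℂ} (hC : C ≠ 0)
    {r₁ σ₁ r₂ σ₂ : ℝ} (hr₁ : 0 < r₁) (hσ₁ : 0 ≤ σ₁) (hr₂ : 0 < r₂) (hσ₂ : 0 ≤ σ₂)
    (hph : |miAlpha f₀ μ₀ σ₁ * r₁ - miAlpha f₀ μ₀ σ₂ * r₂| < 2 * π)
    (heq : miH f₀ μ₀ C r₁ σ₁ = miH f₀ μ₀ C r₂ σ₂) :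
    r₁ = r₂ ∧ σ₁ = σ₂ := by
  rw [miH_eq_mul_cexp_div_pow, miH_eq_mul_cexp_div_pow] at heq
  have him : (-(1 + Complex.I)).im = -1 := by simp
  obtain ⟨rfl, hphase⟩ := cexp_mul_ofReal_div_pow_inj (by simp) three_ne_zero hr₁ hr₂
    (by rwa [him, neg_one_mul, neg_one_mul, neg_sub_neg, abs_sub_comm])
    (mul_left_cancel₀ hC heq)
  exact ⟨rfl, miAlpha_injOn hf₀ hμ₀ hσ₁ hσ₂ (mul_right_cancel₀ hr₁.ne' hphase)⟩

/-- The MI channel map is injective on the phase-unwrapped region `α(σ)·r < 2π`. -/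
theorem stmt_16 (f₀ μ₀ : ℝ) (hf₀ : 0 < f₀) (hμ₀ : 0 < μ₀) (C : ℂ) (hC : C ≠ 0)
    (r₁ σ₁ r₂ σ₂ : ℝ) (hr₁ : 0 < r₁) (hσ₁ : 0 < σ₁) (hr₂ : 0 < r₂) (hσ₂ : 0 < σ₂)
    (hph₁ : miAlpha f₀ μ₀ σ₁ * r₁ < 2 * Real.pi)
    (hph₂ : miAlpha f₀ μ₀ σ₂ * r₂ < 2 * Real.pi)
    (heq : miH f₀ μ₀ C r₁ σ₁ = miH f₀ μ₀ C r₂ σ₂) :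
    r₁ = r₂ ∧ σ₁ = σ₂ := by
  exact stmt_16_general hf₀ hμ₀ hC hr₁ hσ₁.le hr₂ hσ₂.le
    (abs_sub_lt_of_nonneg_of_lt (miAlpha_mul_nonneg f₀ μ₀ σ₁ hr₁.le) hph₁
      (miAlpha_mul_nonneg f₀ μ₀ σ₂ hr₂.le) hph₂) heq
end
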